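/- Let G be a connected subdivision of an odd graph (i.e., every vertex of G has odd degree or degree 2) with χ'_o(G) = 4. Then no vertex of degree 2 in G is a cut-vertex. -/

import Mathlib

open SimpleGraph Finset

variable {V : Type*} [Fintype V] [DecidableEq V]

/-- Number of edges incident to `v` receiving color `i` under the edge-coloring `f`. -/
def colorCount (G : SimpleGraph V) [DecidableRel G.Adj] {k : ℕ}
    (f : Sym2 V → Fin k) (v : V) (i : Fin k) : ℕ :=
  ((G.incidenceFinset v).filter (fun e => f e = i)).card

/-- The edge-coloring `f` is odd at the vertex `v`: every color appearing at `v`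
appears an odd number of times at `v`. -/
def OddAt (G : SimpleGraph V) [DecidableRel G.Adj] {k : ℕ}
    (f : Sym2 V → Fin k) (v : V) : Prop :=
  ∀ i : Fin k, colorCount G f v i = 0 ∨ Odd (colorCount G f v i)

/-- An odd edge-coloring: odd at every vertex. -/
def IsOddColoring (G : SimpleGraph V) [DecidableRel G.Adj] {k : ℕ}
    (f : Sym2 V → Fin k) : Prop :=
  ∀ v : V, OddAt G f v

/-- The odd chromatic index: least `k` admitting an odd `k`-edge-coloring. -/
noncomputable def oddChromIndex (G : SimpleGraph V) [DecidableRel G.Adj] : ℕ :=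
  sInf {k | ∃ f : Sym2 V → Fin k, IsOddColoring G f}

/-!
Write `G` as a forest `N` plus a graph of odd degree away from `v`: take a spanning tree `T`, and
move into `G \ T` the edges of a subset of `T` that corrects every parity except the one at `v`.
Across a bridge at `v` the colors of the far side can be permuted freely, which disturbs oddness at
no vertex but `v`. Applied in `N`, vertex by vertex, this produces an odd 2-coloring of the forest;
with a third color for `G \ N`, the graph `G` gets a 3-coloring that is odd away from `v`. If `v`
is a cut-vertex of degree 2, then both of its edges are bridges of `G`, and recoloring across one of
them makes the coloring odd at `v` as well.
-/

section OddAt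

variable {G : SimpleGraph V} [DecidableRel G.Adj] {k : ℕ} {f g : Sym2 V → Fin k} {v : V}

lemma colorCount_congr (h : ∀ e ∈ G.incidenceSet v, f e = g e) (i : Fin k) :
    colorCount G f v i = colorCount G g v i := by
  refine congrArg Finset.card (Finset.filter_congr fun e he => ?_)
  rw [h e ((G.mem_incidenceFinset v e).mp he)]

lemma OddAt.congr (hf : OddAt G f v) (h : ∀ e ∈ G.incidenceSet v, f e = g e) : OddAt G g v :=
  fun i => colorCount_congr h i ▸ hf i

lemma OddAt.perm_comp (hf : OddAt G f v) (σ : Equiv.Perm (Fin k)) : OddAt G (σ ∘ f) v := by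
  intro i
  have hcount : colorCount G (σ ∘ f) v i = colorCount G f v (σ.symm i) := by
    simp only [colorCount, Function.comp_apply, Equiv.eq_symm_apply]
  exact hcount ▸ hf (σ.symm i)

lemma oddAt_of_injOn (hf : Set.InjOn f (G.incidenceSet v)) : OddAt G f v := by
  intro i
  have hle : colorCount G f v i ≤ 1 := by
    refine Finset.card_le_one.mpr fun e he e' he' => ?_
    simp only [Finset.mem_filter, mem_incidenceFinset] at he he'
    exact hf he.1 he'.1 (he.2.trans he'.2.symm)
  obtain h | h := Nat.le_one_iff_eq_zero_or_eq_one.mp hle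
  · exact .inl h
  · exact .inr (h ▸ odd_one)

lemma exists_oddAt (G : SimpleGraph V) [DecidableRel G.Adj] (v : V) :
    ∃ f : Sym2 V → Fin 2, OddAt G f v := by
  obtain hdeg | hdeg := Nat.even_or_odd (G.degree v)
  · obtain hempty | ⟨e₀, he₀⟩ := (G.incidenceFinset v).eq_empty_or_nonempty
    · exact ⟨0, fun i => .inl (by simp [colorCount, hempty])⟩
    let f (e : Sym2 V) : Fin 2 := if e = e₀ then 1 else 0
    have hzero : colorCount G f v 0 + 1 = G.degree v := by
      rw [← card_incidenceFinset_eq_degree, ← Finset.card_erase_add_one he₀, colorCount]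
      simp [f, Finset.filter_ne']
    have hone : colorCount G f v 1 = 1 := by
      simp [colorCount, f, Finset.filter_eq', he₀]
    refine ⟨f, Fin.forall_fin_two.mpr ⟨.inr ?_, .inr ?_⟩⟩
    · rw [← hzero] at hdeg
      exact Nat.not_even_iff_odd.mp (Nat.even_add_one.mp hdeg)
    · rw [hone]
      exact odd_one
  · refine ⟨0, Fin.forall_fin_two.mpr ⟨.inr ?_, .inl ?_⟩⟩
    · simpa [colorCount] using hdeg
    · simp [colorCount]

end OddAt

section Bridge

lemma reachable_deleteEdges_iff_of_mem {α : Type*} {G : SimpleGraph α} {u : α} {s : Set (Sym2 α)}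
    {e : Sym2 α} {x y : α} (he : e ∈ G.edgeSet) (hs : e ∉ s) (hx : x ∈ e) (hy : y ∈ e) :
    (G.deleteEdges s).Reachable u x ↔ (G.deleteEdges s).Reachable u y := by
  obtain rfl | hxy := eq_or_ne x y
  · rfl
  obtain rfl := (Sym2.mem_and_mem_iff hxy).mp ⟨hx, hy⟩
  have hadj : (G.deleteEdges s).Adj x y := deleteEdges_adj.mpr ⟨he, hs⟩
  exact ⟨fun h => h.trans hadj.reachable, fun h => h.trans hadj.symm.reachable⟩

variable {G : SimpleGraph V} [DecidableRel G.Adj] {k : ℕ} {v a : V}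

lemma exists_recoloring_of_isBridge (hb : G.IsBridge s(v, a)) (f : Sym2 V → Fin k) (c : Fin k) :
    ∃ g : Sym2 V → Fin k, g s(v, a) = c ∧
      (∀ e ∈ G.incidenceSet v, e ≠ s(v, a) → g e = f e) ∧
      ∀ w ≠ v, OddAt G f w → OddAt G g w := by
  classical
  let FarSide (x : V) : Prop := (G.deleteEdges {s(v, a)}).Reachable a x
  have ha : FarSide a := Reachable.refl a
  have hv : ¬ FarSide v := fun h => isBridge_iff.mp hb h.symm
  let σ : Equiv.Perm (Fin k) := Equiv.swap (f s(v, a)) c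
  let g (e : Sym2 V) : Fin k := if ∃ x ∈ e, FarSide x then σ (f e) else f e
  have hfar {w : V} (hw : FarSide w) : ∀ e ∈ G.incidenceSet w, (σ ∘ f) e = g e :=
    fun e he => (if_pos ⟨w, he.2, hw⟩).symm
  have hnear {w : V} (hw : ¬ FarSide w) {e : Sym2 V} (he : e ∈ G.incidenceSet w)
      (hne : e ≠ s(v, a)) : g e = f e :=
    if_neg fun ⟨_, hx, hfarx⟩ =>
      hw ((reachable_deleteEdges_iff_of_mem he.1 hne hx he.2).mp hfarx)
  refine ⟨g, ?_, fun e he => hnear hv he, fun w hwv hodd => ?_⟩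
  · have hg : g s(v, a) = σ (f s(v, a)) := if_pos ⟨a, Sym2.mem_mk_right v a, ha⟩
    rw [hg, Equiv.swap_apply_left]
  · by_cases hw : FarSide w
    · exact (hodd.perm_comp σ).congr (hfar hw)
    · refine hodd.congr fun e he => (hnear hw he ?_).symm
      rintro rfl
      obtain rfl | rfl := Sym2.mem_iff.mp he.2
      exacts [hwv rfl, hw ha]

lemma exists_isOddColoring_of_isBridge [Nontrivial (Fin k)] (hdeg : G.degree v = 2)
    (hadj : G.Adj v a) (hb : G.IsBridge s(v, a)) {f : Sym2 V → Fin k}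
    (hf : ∀ w ≠ v, OddAt G f w) : ∃ g : Sym2 V → Fin k, IsOddColoring G g := by
  have hmem : s(v, a) ∈ G.incidenceFinset v := by simpa using hadj
  obtain ⟨e', he'⟩ : ∃ e', (G.incidenceFinset v).erase s(v, a) = {e'} := by
    rw [← Finset.card_eq_one, Finset.card_erase_of_mem hmem, card_incidenceFinset_eq_degree, hdeg]
  obtain ⟨hne, hmem'⟩ := Finset.mem_erase.mp (he' ▸ Finset.mem_singleton_self e')
  have hincidence : G.incidenceSet v = {s(v, a), e'} := by
    rw [← coe_incidenceFinset, ← Finset.insert_erase hmem, he', Finset.coe_pair]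
  obtain ⟨c, hc⟩ := exists_ne (f e')
  obtain ⟨g, hgc, hgf, hg⟩ := exists_recoloring_of_isBridge hb f c
  have hge' : g e' = f e' := hgf e' ((G.mem_incidenceFinset v e').mp hmem') hne
  refine ⟨g, fun w => ?_⟩
  obtain rfl | hw := eq_or_ne w v
  · refine oddAt_of_injOn ?_
    rw [hincidence, Set.injOn_pair, hgc, hge']
    exact fun h => absurd h hc
  · exact hg w hw (hf w hw)

lemma connected_induce_compl_singleton_of_not_isBridge {α : Type*} {G : SimpleGraph α}
    {v a : α} [Fintype (G.neighborSet v)] (hG : G.Connected) (hdeg : G.degree v = 2)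
    (hadj : G.Adj v a) (hb : ¬ G.IsBridge s(v, a)) : (G.induce {v}ᶜ).Connected := by
  classical
  have : Fintype ((G.deleteEdges {s(v, a)}).neighborSet v) :=
    Set.fintypeSubset (G.neighborSet v) fun _ h => deleteEdges_le _ h
  have hneighbor : (G.deleteEdges {s(v, a)}).neighborFinset v = (G.neighborFinset v).erase a := by
    ext y
    simp [hadj.ne, and_comm]
  have hleaf : (G.deleteEdges {s(v, a)}).degree v = 1 := by
    rw [← card_neighborFinset_eq_degree, hneighbor, Finset.card_erase_of_mem (by simpa using hadj),
      card_neighborFinset_eq_degree, hdeg]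
  exact ((hG.connected_delete_edge_of_not_isBridge hb).induce_compl_singleton_of_degree_eq_one
    hleaf).mono (comap_monotone _ (deleteEdges_le _))

end Bridge

section Forest

variable {N : SimpleGraph V} [DecidableRel N.Adj] {k : ℕ}

lemma exists_recoloring_eqOn_incidenceSet (hN : N.IsAcyclic) (f t : Sym2 V → Fin k) (v : V) :
    ∃ g : Sym2 V → Fin k, (∀ e ∈ N.incidenceSet v, g e = t e) ∧
      ∀ w ≠ v, OddAt N f w → OddAt N g w := by
  suffices h : ∀ s ⊆ N.incidenceFinset v, ∃ g : Sym2 V → Fin k,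
      (∀ e ∈ s, g e = t e) ∧ ∀ w ≠ v, OddAt N f w → OddAt N g w by
    simpa using h _ subset_rfl
  intro s
  induction s using Finset.induction_on with
  | empty => exact fun _ => ⟨f, by simp, fun _ _ => id⟩
  | insert e s hes ih =>
    intro hs
    obtain ⟨hinc, hsub⟩ := Finset.insert_subset_iff.mp hs
    rw [mem_incidenceFinset] at hinc
    obtain ⟨g, hgt, hg⟩ := ih hsub
    obtain ⟨a, rfl⟩ := Sym2.mem_iff_exists.mp hinc.2
    obtain ⟨g', hg'e, hg'g, hg'⟩ := exists_recoloring_of_isBridge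
      (isAcyclic_iff_forall_isBridge.mp hN hinc.1) g (t s(v, a))
    refine ⟨g', (Finset.forall_mem_insert _ _ _).mpr ⟨hg'e, fun e he => ?_⟩,
      fun w hw h => hg' w hw (hg w hw h)⟩
    rw [hg'g e ((N.mem_incidenceFinset v e).mp (hsub he)) (ne_of_mem_of_not_mem he hes), hgt e he]

lemma exists_isOddColoring_of_isAcyclic (hN : N.IsAcyclic) :
    ∃ g : Sym2 V → Fin 2, IsOddColoring N g := by
  suffices h : ∀ U : Finset V, ∃ g : Sym2 V → Fin 2, ∀ w ∈ U, OddAt N g w by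
    simpa [IsOddColoring] using h Finset.univ
  intro U
  induction U using Finset.induction_on with
  | empty => exact ⟨0, by simp⟩
  | insert v U hv ih =>
    obtain ⟨f, hf⟩ := ih
    obtain ⟨t, ht⟩ := exists_oddAt N v
    obtain ⟨g, hgt, hg⟩ := exists_recoloring_eqOn_incidenceSet hN f t v
    exact ⟨g, (Finset.forall_mem_insert _ _ _).mpr ⟨ht.congr fun e he => (hgt e he).symm,
      fun w hw => hg w (ne_of_mem_of_not_mem hw hv) (hf w hw)⟩⟩

end Forest

section Parity

variable {G : SimpleGraph V} [DecidableRel G.Adj]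

lemma sum_incidenceFinset_count_edges {x y : V} (p : G.Walk x y) (w : V) :
    ∑ e ∈ G.incidenceFinset w, (p.edges.count e : ZMod 2)
      = (if w = x then 1 else 0) + if w = y then 1 else 0 := by
  induction p with
  | nil => simp [CharTwo.add_self_eq_zero]
  | @cons x z y h p ih =>
    have hedge : (if s(x, z) ∈ G.incidenceFinset w then 1 else 0 : ZMod 2)
        = (if w = x then 1 else 0) + if w = z then 1 else 0 := by
      have hxz : x ≠ z := h.ne
      simp only [mem_incidenceFinset, mk'_mem_incidenceSet_iff, h, true_and]
      grind
    simp only [Walk.edges_cons, List.count_cons, beq_iff_eq, Nat.cast_add, Nat.cast_ite,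
      Nat.cast_one, Nat.cast_zero, Finset.sum_add_distrib, ih, Finset.sum_ite_eq, hedge]
    linear_combination CharTwo.add_self_eq_zero (if w = z then 1 else 0 : ZMod 2)

lemma exists_sum_incidenceFinset_eq (hG : G.Preconnected) (v : V) (t : V → ZMod 2) :
    ∃ x : Sym2 V → ZMod 2, ∀ w ≠ v, ∑ e ∈ G.incidenceFinset w, x e = t w := by
  let p (u : V) : G.Walk u v := (hG u v).some
  refine ⟨fun e => ∑ u, t u * (p u).edges.count e, fun w hw => ?_⟩
  rw [Finset.sum_comm]
  simp [← Finset.mul_sum, sum_incidenceFinset_count_edges, hw]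

lemma sum_zmod_two_eq_card_filter {ι : Type*} (s : Finset ι) (x : ι → ZMod 2) :
    ∑ e ∈ s, x e = #{e ∈ s | x e = 1} := by
  rw [← Finset.sum_boole]
  have hval : ∀ z : ZMod 2, z = if z = 1 then 1 else 0 := by decide
  exact Finset.sum_congr rfl fun e _ => hval (x e)

lemma exists_isAcyclic_forall_odd_degree_sdiff {α : Type*} [Fintype α] {G : SimpleGraph α}
    [DecidableRel G.Adj] (hG : G.Connected) (v : α) :
    ∃ (N : SimpleGraph α) (_ : DecidableRel N.Adj), N ≤ G ∧ N.IsAcyclic ∧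
      ∀ w ≠ v, Odd ((G \ N).degree w) := by
  classical
  obtain ⟨T, hTG, hT⟩ := hG.exists_isTree_le
  obtain ⟨x, hx⟩ := exists_sum_incidenceFinset_eq hT.connected.preconnected v
    fun w => (G \ T).degree w + 1
  let N := T.deleteEdges {e | x e = 1}
  refine ⟨N, inferInstance, (deleteEdges_le _).trans hTG, hT.isAcyclic.anti (deleteEdges_le _),
    fun w hw => ZMod.natCast_eq_one_iff_odd.mp ?_⟩
  have hincidence : (G \ N).incidenceFinset w
      = (G \ T).incidenceFinset w ∪ {e ∈ T.incidenceFinset w | x e = 1} := by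
    ext e
    have hle := @edgeSet_mono _ T G hTG e
    simp only [N, mem_incidenceFinset, incidenceSet, edgeSet_sdiff, edgeSet_deleteEdges,
      Set.mem_ofPred_eq, Set.mem_sdiff, Finset.mem_union, Finset.mem_filter]
    tauto
  have hdisjoint : Disjoint ((G \ T).incidenceFinset w) {e ∈ T.incidenceFinset w | x e = 1} :=
    (disjoint_incidenceFinset_of_disjoint (G \ T) T w disjoint_sdiff_self_left).mono_right
      (Finset.filter_subset _ _)
  rw [← card_incidenceFinset_eq_degree, hincidence, Finset.card_union_of_disjoint hdisjoint,
    Nat.cast_add, ← sum_zmod_two_eq_card_filter, hx w hw, card_incidenceFinset_eq_degree,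
    CharTwo.add_cancel_left]

end Parity

section CutVertex

variable {G : SimpleGraph V} [DecidableRel G.Adj]

lemma exists_forall_ne_oddAt (hG : G.Connected) (v : V) :
    ∃ f : Sym2 V → Fin 3, ∀ w ≠ v, OddAt G f w := by
  obtain ⟨N, _, hNG, hN, hodd⟩ := exists_isAcyclic_forall_odd_degree_sdiff hG v
  obtain ⟨g, hg⟩ := exists_isOddColoring_of_isAcyclic hN
  let f (e : Sym2 V) : Fin 3 := if e ∈ N.edgeSet then (g e).succ else 0
  have hzero (w : V) : colorCount G f w 0 = (G \ N).degree w := by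
    rw [← card_incidenceFinset_eq_degree, colorCount]
    congr 1
    ext e
    simp [f, incidenceSet, and_right_comm]
  have hsucc (w : V) (i : Fin 2) : colorCount G f w i.succ = colorCount N g w i := by
    refine congrArg Finset.card (Finset.ext fun e => ?_)
    have hle := @edgeSet_mono _ N G hNG e
    by_cases he : e ∈ N.edgeSet
    · simp [f, incidenceSet, he, hle he]
    · simp [f, incidenceSet, he, (Fin.succ_ne_zero i).symm]
  refine ⟨f, fun w hw => Fin.forall_fin_succ.mpr ⟨.inr ?_, fun i => ?_⟩⟩
  · exact hzero w ▸ hodd w hw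
  · exact hsucc w i ▸ hg w i

theorem degree_two_not_cutvertex_general (hG : G.Connected) (hchi : 3 < oddChromIndex G) {v : V}
    (hv : G.degree v = 2) : (G.induce {v}ᶜ).Connected := by
  obtain ⟨a, hadj⟩ := (G.degree_pos_iff_exists_adj v).mp (hv ▸ two_pos)
  refine connected_induce_compl_singleton_of_not_isBridge hG hv hadj fun hb => ?_
  obtain ⟨f, hf⟩ := exists_forall_ne_oddAt hG v
  exact hchi.not_ge (Nat.sInf_le (exists_isOddColoring_of_isBridge hv hadj hb hf))

end CutVertex

theorem degree_two_not_cutvertex (G : SimpleGraph V) [DecidableRel G.Adj]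
    (hG : G.Connected) (hsub : ∀ v : V, Odd (G.degree v) ∨ G.degree v = 2)
    (hchi : oddChromIndex G = 4) :
    ∀ v : V, G.degree v = 2 → (G.induce ({v}ᶜ : Set V)).Connected :=
  fun _ hv => degree_two_not_cutvertex_general hG (hchi ▸ Nat.lt_succ_self 3) hv
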